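/- Let $K$ be an algebraically closed field and let $\Gamma$ be a finite tree with a fixed cyclic ordering of the edges incident to each vertex (a Brauer tree of multiplicity one). Let $Q$ be its Brauer quiver: the vertices of $Q$ are the edges of $\Gamma$, and for every edge $i$ and every end $x$ of $i$ there is an arrow from $i$ to the edge following $i$ in the cyclic ordering around $x$ (a loop if $x$ is a leaf); the arrows obtained from one vertex $x$ of $\Gamma$ form an oriented cycle of $Q$. Let $A = KQ/I$ be the basic Brauer tree algebra of $\Gamma$, where $ab$ denotes the path $a$ followed by $b$ and $I$ is generated by the products $ab$ of arrows belonging to the cycles of different vertices of $\Gamma$ and, for every edge $i$ of $\Gamma$ with ends $x,y$, by the difference of the two closed paths that start at $i$ and run once around the cycle of $x$, respectively of $y$. An $A$-cycle is a maximal ordered set of nonrepeating arrows of $Q$ such that the product in $A$ of any two neighboring arrows is nonzero; a vertex of $Q$ belongs to it if it is the source or the target of one of its arrows. Let $D^b(A)$ be the bounded derived category of finitely generated left $A$-modules. For a vertex $i$ of $Q$, with idempotent $e_i\in A$, the vertex corresponding to a stalk complex of the indecomposable projective module $Ae_i$ is $i$. Let $P_i$ and $P_j$ be stalk complexes of the indecomposable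 projective $A$-modules $Ae_i$ and $Ae_j$, each concentrated in (cohomological) degree $0$ or $1$. Then $\mathrm{Hom}_{D^b(A)}(P_i, P_j[-1]) = 0 = \mathrm{Hom}_{D^b(A)}(P_j, P_i[-1])$ if and only if one of the following holds: (1) the vertices corresponding to $P_i$ and $P_j$ do not belong to the same $A$-cycle; (2) the vertices corresponding to $P_i$ and $P_j$ belong to the same $A$-cycle and $P_i$, $P_j$ are concentrated in the same degree. -/

import Mathlib

open CategoryTheory

universe w u v

/-! ### Path algebras of finite quivers -/

section PathAlgebra

variable (K : Type*) [Field K] {I E : Type*} (s t : E → I)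

/-- The defining relations of the path algebra of a quiver with vertices `I`, arrows `E`, source `s`
and target `t`, on the free algebra generated by the vertices (`Sum.inl`) and arrows (`Sum.inr`).
Products are written in the order in which the arrows are traversed:
`a * b` is the path `a` followed by `b`. -/
inductive PathAlgebraRel : FreeAlgebra K (I ⊕ E) → FreeAlgebra K (I ⊕ E) → Prop
  | idem (i : I) : PathAlgebraRel
      (FreeAlgebra.ι K (Sum.inl i) * FreeAlgebra.ι K (Sum.inl i)) (FreeAlgebra.ι K (Sum.inl i))
  | orth (i j : I) (h : i ≠ j) : PathAlgebraRel
      (FreeAlgebra.ι K (Sum.inl i) * FreeAlgebra.ι K (Sum.inl j)) 0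
  | sum : PathAlgebraRel (∑ᶠ i : I, FreeAlgebra.ι K (Sum.inl i)) 1
  | source (a : E) : PathAlgebraRel
      (FreeAlgebra.ι K (Sum.inl (s a)) * FreeAlgebra.ι K (Sum.inr a)) (FreeAlgebra.ι K (Sum.inr a))
  | target (a : E) : PathAlgebraRel
      (FreeAlgebra.ι K (Sum.inr a) * FreeAlgebra.ι K (Sum.inl (t a))) (FreeAlgebra.ι K (Sum.inr a))

/-- The path algebra over `K` of a quiver with finitely many vertices. -/
def PathAlgebra : Type _ := RingQuot (PathAlgebraRel K s t)

namespace PathAlgebra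

noncomputable instance : Ring (PathAlgebra K s t) :=
  inferInstanceAs (Ring (RingQuot (PathAlgebraRel K s t)))

noncomputable instance : Algebra K (PathAlgebra K s t) :=
  inferInstanceAs (Algebra K (RingQuot (PathAlgebraRel K s t)))

/-- The quotient map from the free algebra. -/
noncomputable def proj : FreeAlgebra K (I ⊕ E) →ₐ[K] PathAlgebra K s t :=
  RingQuot.mkAlgHom K (PathAlgebraRel K s t)

/-- The trivial path at a vertex. -/
noncomputable def idem (i : I) : PathAlgebra K s t := proj K s t (FreeAlgebra.ι K (Sum.inl i))

/-- The path consisting of one arrow. -/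
noncomputable def arrow (a : E) : PathAlgebra K s t := proj K s t (FreeAlgebra.ι K (Sum.inr a))

end PathAlgebra

end PathAlgebra

/-! ### Brauer trees of multiplicity one and their algebras -/

/-- A Brauer tree of multiplicity one with vertex set `V`: a tree with a cyclic ordering of the
edges incident to each vertex. An edge `x - y` seen from its end `x` is the dart from `x` to `y`;
`next` sends an edge, seen from one of its ends, to the edge that follows it in the cyclic ordering
around that end. -/
structure BrauerTree (V : Type v) where
  /-- the underlying tree -/
  graph : SimpleGraph V
  isTree : graph.IsTree
  /-- the successor in the cyclic orderings -/
  next : Equiv.Perm graph.Dart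
  next_fst : ∀ d, (next d).fst = d.fst
  sameCycle : ∀ d d', d.fst = d'.fst → next.SameCycle d d'

namespace BrauerTree

variable {V : Type v} (T : BrauerTree V)

/-- The edges of the tree; they are the vertices of the Brauer quiver. -/
abbrev Edge : Type v := T.graph.edgeSet

/-- The arrows of the Brauer quiver: for every edge `i` incident to a vertex `x` of the tree there
is an arrow from `i` to the edge that follows `i` in the cyclic ordering around `x`
(a loop if `x` is a leaf). -/
abbrev Arrow : Type v := T.graph.Dart

/-- The source of an arrow. -/
def src (a : T.Arrow) : T.Edge := ⟨a.edge, a.edge_mem⟩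

/-- The target of an arrow. -/
def tgt (a : T.Arrow) : T.Edge := T.src (T.next a)

variable (K : Type u) [Field K]

/-- The path of length `m` starting with the arrow `a` and running around the cycle of the Brauer
quiver that contains `a`. -/
noncomputable def run (a : T.Arrow) (m : ℕ) : PathAlgebra K T.src T.tgt :=
  ((List.range m).map fun k => PathAlgebra.arrow K T.src T.tgt ((T.next ^ k) a)).prod

/-- The relations of the Brauer tree algebra of multiplicity one: the product of two arrows from
different cycles is zero, and for each edge the two cycles starting at this edge, traversed
once, are equal. (The number of arrows in the cycle around a vertex is the number of darts
starting at this vertex.) -/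
inductive Rel : PathAlgebra K T.src T.tgt → PathAlgebra K T.src T.tgt → Prop
  | zero (a b : T.Arrow) (h : a.fst ≠ b.fst) :
      Rel (PathAlgebra.arrow K T.src T.tgt a * PathAlgebra.arrow K T.src T.tgt b) 0
  | cycle (a : T.Arrow) :
      Rel (T.run K a (Nat.card {b : T.Arrow // b.fst = a.fst}))
        (T.run K a.symm (Nat.card {b : T.Arrow // b.fst = a.symm.fst}))

/-- The basic Brauer tree algebra over `K` of a Brauer tree of multiplicity one. -/
def BrauerAlgebra : Type (max u v) := RingQuot (T.Rel K)

noncomputable instance : Ring (T.BrauerAlgebra K) :=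
  inferInstanceAs (Ring (RingQuot (T.Rel K)))

noncomputable instance : Algebra K (T.BrauerAlgebra K) :=
  inferInstanceAs (Algebra K (RingQuot (T.Rel K)))

/-- The quotient map from the path algebra of the Brauer quiver. -/
noncomputable def proj : PathAlgebra K T.src T.tgt →ₐ[K] T.BrauerAlgebra K :=
  RingQuot.mkAlgHom K (T.Rel K)

/-- The idempotent `e_i` of the Brauer tree algebra. -/
noncomputable def e (i : T.Edge) : T.BrauerAlgebra K := T.proj K (PathAlgebra.idem K T.src T.tgt i)

/-- The class of an arrow in the Brauer tree algebra. -/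
noncomputable def arr (a : T.Arrow) : T.BrauerAlgebra K :=
  T.proj K (PathAlgebra.arrow K T.src T.tgt a)

/-! ### Cycles in the quiver of the algebra -/

/-- An ordered set of nonrepeating arrows such that the product of any two neighboring arrows is
nonzero in the algebra. -/
def IsArrowChain (L : List T.Arrow) : Prop :=
  L.Nodup ∧ L.IsChain fun a b => T.arr K a * T.arr K b ≠ 0

/-- An `A`-cycle: a maximal ordered set of nonrepeating arrows such that the product of any two
neighboring arrows is nonzero. -/
def IsACycle (L : List T.Arrow) : Prop :=
  T.IsArrowChain K L ∧ ∀ L', T.IsArrowChain K L' → L.Sublist L' → L' = L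

/-- The vertex `i` of the quiver belongs to the ordered set of arrows `L`. -/
def MemCycle (i : T.Edge) (L : List T.Arrow) : Prop :=
  ∃ a ∈ L, T.src a = i ∨ T.tgt a = i

/-- The vertices `i` and `j` of the quiver belong to the same `A`-cycle. -/
def OnCommonACycle (i j : T.Edge) : Prop :=
  ∃ L, T.IsACycle K L ∧ T.MemCycle i L ∧ T.MemCycle j L

/-! ### The algebra is finite-dimensional -/

lemma arr_mul_arr (a b : T.Arrow) (h : a.fst ≠ b.fst) : T.arr K a * T.arr K b = 0 := by
  have : T.proj K (PathAlgebra.arrow K T.src T.tgt a * PathAlgebra.arrow K T.src T.tgt b) =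
      T.proj K 0 := RingQuot.mkAlgHom_rel K (Rel.zero (T := T) (K := K) a b h)
  rwa [map_mul, map_zero] at this

lemma e_mul_e_self (i : T.Edge) : T.e K i * T.e K i = T.e K i := by
  have := congrArg (T.proj K)
    (RingQuot.mkAlgHom_rel K (PathAlgebraRel.idem (K := K) (s := T.src) (t := T.tgt) i))
  rw [map_mul] at this
  exact (map_mul (T.proj K) _ _).symm.trans this

lemma e_mul_e (i j : T.Edge) (h : i ≠ j) : T.e K i * T.e K j = 0 := by
  have := congrArg (T.proj K)
    (RingQuot.mkAlgHom_rel K (PathAlgebraRel.orth (K := K) (s := T.src) (t := T.tgt) i j h))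
  rw [map_mul, map_zero] at this
  exact (map_mul (T.proj K) _ _).symm.trans (this.trans (map_zero _))

lemma e_mul_arr (a : T.Arrow) : T.e K (T.src a) * T.arr K a = T.arr K a := by
  have := congrArg (T.proj K)
    (RingQuot.mkAlgHom_rel K (PathAlgebraRel.source (K := K) (s := T.src) (t := T.tgt) a))
  rw [map_mul] at this
  exact (map_mul (T.proj K) _ _).symm.trans this

lemma arr_mul_e (a : T.Arrow) : T.arr K a * T.e K (T.tgt a) = T.arr K a := by
  have := congrArg (T.proj K)
    (RingQuot.mkAlgHom_rel K (PathAlgebraRel.target (K := K) (s := T.src) (t := T.tgt) a))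
  rw [map_mul] at this
  exact (map_mul (T.proj K) _ _).symm.trans this

lemma finsum_e [Finite V] : ∑ᶠ i, T.e K i = 1 := by
  have := congrArg (T.proj K)
    (RingQuot.mkAlgHom_rel K (PathAlgebraRel.sum (K := K) (s := T.src) (t := T.tgt)))
  rw [map_one] at this
  have h2 := map_finsum ((T.proj K).comp (PathAlgebra.proj K T.src T.tgt))
    (f := fun i : T.Edge => FreeAlgebra.ι K (Sum.inl i)) (Set.toFinite _)
  exact h2.symm.trans (this.trans (map_one _))

lemma proj_run_zero (a : T.Arrow) : T.proj K (T.run K a 0) = 1 := by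
  simp [run]

lemma proj_run_succ (a : T.Arrow) (m : ℕ) :
    T.proj K (T.run K a (m + 1)) = T.proj K (T.run K a m) * T.arr K ((T.next ^ m) a) := by
  simp [run, List.range_succ, arr]

lemma next_pow_fst (a : T.Arrow) (m : ℕ) : ((T.next ^ m) a).fst = a.fst := by
  induction m with
  | zero => rfl
  | succ m ih => rw [pow_succ', Equiv.Perm.mul_apply, T.next_fst, ih]

lemma proj_run_succ_mul_arr (a b : T.Arrow) (m : ℕ) (h : a.fst ≠ b.fst) :
    T.proj K (T.run K a (m + 1)) * T.arr K b = 0 := by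
  rw [proj_run_succ, mul_assoc, arr_mul_arr, mul_zero]
  rwa [next_pow_fst]

lemma proj_run_card [Finite V] (a : T.Arrow) :
    T.proj K (T.run K a (Nat.card {b : T.Arrow // b.fst = a.fst})) =
      T.proj K (T.run K a.symm (Nat.card {b : T.Arrow // b.fst = a.symm.fst})) :=
  RingQuot.mkAlgHom_rel K (Rel.cycle (T := T) (K := K) a)

/-- A finite set spanning the algebra: the idempotents and the nontrivial paths running at most
once around a cycle. -/
def spanningSet : Set (T.BrauerAlgebra K) :=
  Set.range (T.e K) ∪ {x | ∃ (a : T.Arrow) (m : ℕ),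
    m < Nat.card {b : T.Arrow // b.fst = a.fst} ∧ x = T.proj K (T.run K a (m + 1))}

instance [Finite V] : Finite T.Arrow :=
  Finite.of_injective _ (SimpleGraph.Dart.toProd_injective (G := T.graph))

lemma spanningSet_finite [Finite V] : (T.spanningSet K).Finite := by
  refine (Set.finite_range _).union ?_
  refine (Set.finite_range fun x : T.Arrow × Fin (Nat.card T.Arrow) =>
    T.proj K (T.run K x.1 (x.2 + 1))).subset ?_
  rintro x ⟨a, m, hm, rfl⟩
  exact ⟨(a, ⟨m, hm.trans_le (Finite.card_subtype_le _)⟩), rfl⟩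

lemma card_pos [Finite V] (a : T.Arrow) : 0 < Nat.card {b : T.Arrow // b.fst = a.fst} :=
  have : Nonempty {b : T.Arrow // b.fst = a.fst} := ⟨⟨a, rfl⟩⟩
  Nat.card_pos

lemma arr_mem [Finite V] (a : T.Arrow) : T.arr K a ∈ Submodule.span K (T.spanningSet K) := by
  refine Submodule.subset_span (Or.inr ⟨a, 0, T.card_pos a, ?_⟩)
  rw [proj_run_succ, proj_run_zero, one_mul]
  rfl

lemma mul_e_mem (x : T.BrauerAlgebra K) (hx : x ∈ Submodule.span K (T.spanningSet K))
    (j : T.Edge) : x * T.e K j ∈ Submodule.span K (T.spanningSet K) := by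
  induction hx using Submodule.span_induction with
  | zero => simp
  | add x y _ _ hx hy => rw [add_mul]; exact add_mem hx hy
  | smul c x _ hx => rw [smul_mul_assoc]; exact Submodule.smul_mem _ _ hx
  | mem x hx =>
    rcases hx with ⟨i, rfl⟩ | ⟨a, m, hm, rfl⟩
    · by_cases h : i = j
      · subst h
        rw [e_mul_e_self]
        exact Submodule.subset_span (Or.inl ⟨i, rfl⟩)
      · simp [e_mul_e _ _ _ _ h]
    · by_cases h : T.tgt ((T.next ^ m) a) = j
      · subst h
        rw [proj_run_succ, mul_assoc, arr_mul_e, ← proj_run_succ]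
        exact Submodule.subset_span (Or.inr ⟨a, m, hm, rfl⟩)
      · rw [proj_run_succ, ← arr_mul_e, mul_assoc, mul_assoc, e_mul_e _ _ _ _ h]
        simp

lemma mul_arr_mem [Finite V] (x : T.BrauerAlgebra K)
    (hx : x ∈ Submodule.span K (T.spanningSet K)) (b : T.Arrow) :
    x * T.arr K b ∈ Submodule.span K (T.spanningSet K) := by
  induction hx using Submodule.span_induction with
  | zero => simp
  | add x y _ _ hx hy => rw [add_mul]; exact add_mem hx hy
  | smul c x _ hx => rw [smul_mul_assoc]; exact Submodule.smul_mem _ _ hx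
  | mem x hx =>
    rcases hx with ⟨i, rfl⟩ | ⟨a, m, hm, rfl⟩
    · by_cases h : i = T.src b
      · subst h
        rw [e_mul_arr]
        exact T.arr_mem K b
      · rw [← e_mul_arr, ← mul_assoc, e_mul_e _ _ _ _ h]
        simp
    · by_cases hf : a.fst = b.fst
      · by_cases hlt : m + 1 < Nat.card {b : T.Arrow // b.fst = a.fst}
        · by_cases h : b = (T.next ^ (m + 1)) a
          · subst h
            rw [← proj_run_succ]
            exact Submodule.subset_span (Or.inr ⟨a, m + 1, hlt, rfl⟩)
          · have hne : T.tgt ((T.next ^ m) a) ≠ T.src b := by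
              intro he
              apply h
              have h1 : (T.next ((T.next ^ m) a)).edge = b.edge := congrArg Subtype.val he
              rcases (SimpleGraph.dart_edge_eq_iff _ _).1 h1 with h2 | h2
              · rw [← h2, pow_succ', Equiv.Perm.mul_apply]
              · have h3 := congrArg (fun d : T.graph.Dart => d.fst) h2
                have h4 := b.adj.ne
                simp only [T.next_fst, T.next_pow_fst] at h3
                exact absurd (hf.symm.trans h3) h4
            rw [proj_run_succ, ← arr_mul_e, ← T.e_mul_arr K b, mul_assoc, mul_assoc,
              ← mul_assoc (T.e K _) (T.e K _), e_mul_e _ _ _ _ hne]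
            simp
        · have hm' : m + 1 = Nat.card {b : T.Arrow // b.fst = a.fst} := by omega
          obtain ⟨k, hk⟩ := Nat.exists_eq_succ_of_ne_zero (T.card_pos a.symm).ne'
          rw [hm', proj_run_card, hk, Nat.succ_eq_add_one, proj_run_succ_mul_arr]
          · exact zero_mem _
          · intro h
            exact a.adj.ne (hf.trans h.symm)
      · rw [proj_run_succ_mul_arr _ _ _ _ _ hf]
        exact zero_mem _

lemma span_spanningSet [Finite V] : Submodule.span K (T.spanningSet K) = ⊤ := by
  rw [eq_top_iff]
  rintro y -
  obtain ⟨z, rfl⟩ := RingQuot.mkAlgHom_surjective K (T.Rel K) y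
  obtain ⟨f, rfl⟩ := RingQuot.mkAlgHom_surjective K (PathAlgebraRel K T.src T.tgt) z
  have key : ∀ x ∈ Submodule.span K (T.spanningSet K),
      x * T.proj K (PathAlgebra.proj K T.src T.tgt f) ∈ Submodule.span K (T.spanningSet K) := by
    induction f using FreeAlgebra.induction with
    | grade0 r =>
      intro x hx
      rw [AlgHom.commutes, AlgHom.commutes, ← Algebra.commutes, ← Algebra.smul_def]
      exact Submodule.smul_mem _ _ hx
    | grade1 g =>
      intro x hx
      rcases g with i | a
      · exact T.mul_e_mem K x hx i
      · exact T.mul_arr_mem K x hx a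
    | mul f g hf hg =>
      intro x hx
      rw [map_mul, map_mul, ← mul_assoc]
      exact hg _ (hf _ hx)
    | add f g hf hg =>
      intro x hx
      rw [map_add, map_add, mul_add]
      exact add_mem (hf _ hx) (hg _ hx)
  have h1 : (1 : T.BrauerAlgebra K) ∈ Submodule.span K (T.spanningSet K) := by
    rw [← finsum_e]
    exact finsum_induction (· ∈ Submodule.span K (T.spanningSet K)) (zero_mem _)
      (fun _ _ => add_mem) fun i => Submodule.subset_span (Or.inl ⟨i, rfl⟩)
  have := key 1 h1
  rwa [one_mul] at this

instance [Finite V] : Module.Finite K (T.BrauerAlgebra K) :=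
  ⟨⟨(T.spanningSet_finite K).toFinset, by simpa using T.span_spanningSet K⟩⟩

instance [Finite V] : IsNoetherianRing (T.BrauerAlgebra K) :=
  isNoetherian_of_tower K inferInstance

/-! ### The bounded derived category and stalk complexes -/

/-- The indecomposable projective left module `A e_i`. -/
noncomputable def projModule [Finite V] (i : T.Edge) :
    FGModuleCat.{max u v} (T.BrauerAlgebra K) :=
  FGModuleCat.of (T.BrauerAlgebra K) (Ideal.span {T.e K i} : Ideal (T.BrauerAlgebra K))

/-- The bounded derived category of finitely generated left modules. -/
abbrev Db [Finite V] [HasDerivedCategory.{w} (FGModuleCat.{max u v} (T.BrauerAlgebra K))] :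
    Type _ :=
  DerivedCategory.Bounded (FGModuleCat.{max u v} (T.BrauerAlgebra K))

/-- The module `M`, viewed as a complex concentrated in (cohomological) degree `p`. -/
noncomputable def stalk [Finite V]
    [HasDerivedCategory.{w} (FGModuleCat.{max u v} (T.BrauerAlgebra K))]
    (M : FGModuleCat.{max u v} (T.BrauerAlgebra K)) (p : ℤ) : T.Db K :=
  ⟨(DerivedCategory.singleFunctor _ p).obj M,
    ⟨p, inferInstanceAs (((DerivedCategory.singleFunctor _ p).obj M).IsGE p)⟩,
    ⟨p, inferInstanceAs (((DerivedCategory.singleFunctor _ p).obj M).IsLE p)⟩⟩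

/-- `X` is, up to isomorphism, the stalk complex of the indecomposable projective module
corresponding to the vertex `i`, concentrated in degree `p`. -/
def IsProjStalk [Finite V] [HasDerivedCategory.{w} (FGModuleCat.{max u v} (T.BrauerAlgebra K))]
    (X : T.Db K) (i : T.Edge) (p : ℤ) : Prop :=
  Nonempty (X ≅ T.stalk K (T.projModule K i) p)

end BrauerTree

namespace BrauerTree

variable {V : Type v} (T : BrauerTree V)

/-! ### The cyclic orderings -/

/-- The number of edges at the vertex of the tree at which an arrow is based. -/
noncomputable def valency (a : T.Arrow) : ℕ := Nat.card {b : T.Arrow // b.fst = a.fst}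

lemma valency_congr {a b : T.Arrow} (h : a.fst = b.fst) : T.valency a = T.valency b := by
  simp only [valency, h]

lemma valency_next (a : T.Arrow) : T.valency (T.next a) = T.valency a :=
  T.valency_congr (T.next_fst a)

lemma src_symm (a : T.Arrow) : T.src a.symm = T.src a :=
  Subtype.ext a.edge_symm

lemma isCycleOn_next (x : V) : T.next.IsCycleOn {b : T.Arrow | b.fst = x} := by
  refine ⟨⟨fun b hb => (T.next_fst b).trans hb, T.next.injective.injOn, fun b hb => ?_⟩,
    fun b hb c hc => T.sameCycle b c (hb.trans hc.symm)⟩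
  refine ⟨T.next.symm b, ?_, T.next.apply_symm_apply b⟩
  have := T.next_fst (T.next.symm b)
  rw [Equiv.apply_symm_apply] at this
  exact this.symm.trans hb

section Finite

variable [Finite V]

lemma exists_finset_isCycleOn (a : T.Arrow) : ∃ s : Finset T.Arrow,
    (∀ b, b ∈ s ↔ b.fst = a.fst) ∧ s.card = T.valency a ∧ T.next.IsCycleOn (s : Set T.Arrow) := by
  have hs := Set.toFinite {b : T.Arrow | b.fst = a.fst}
  refine ⟨hs.toFinset, fun b => by simp, ?_, ?_⟩
  · rw [← Set.ncard_eq_toFinset_card _ hs]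
    rfl
  · rw [hs.coe_toFinset]
    exact T.isCycleOn_next a.fst

lemma next_pow_apply_eq_iff (a : T.Arrow) {m n : ℕ} (hm : m < T.valency a)
    (hn : n < T.valency a) : (T.next ^ m) a = (T.next ^ n) a ↔ m = n := by
  obtain ⟨s, hs, hc, h⟩ := T.exists_finset_isCycleOn a
  rw [h.pow_apply_eq_pow_apply ((hs a).2 rfl), hc]
  exact ⟨fun h' => h'.eq_of_lt_of_lt hm hn, fun h' => h' ▸ rfl⟩

lemma next_pow_valency (a : T.Arrow) : (T.next ^ T.valency a) a = a := by
  obtain ⟨s, hs, hc, h⟩ := T.exists_finset_isCycleOn a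
  rw [← hc, h.pow_card_apply ((hs a).2 rfl)]

lemma exists_next_pow_eq {a b : T.Arrow} (hab : a.fst = b.fst) :
    ∃ m < T.valency a, (T.next ^ m) a = b := by
  obtain ⟨s, hs, hc, h⟩ := T.exists_finset_isCycleOn a
  rw [← hc]
  exact h.exists_pow_eq ((hs a).2 rfl) ((hs b).2 hab.symm)

end Finite

/-! ### A representation of the algebra

The left regular representation, on the space spanned by the classes of paths: the trivial
paths, the paths running less than once around a cycle, and the full cycles. -/

/-- The labels of the basis: trivial paths, paths given by their first arrow and their length, and
full cycles. The labels of paths of length zero or of length at least the valency are spurious;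
arrows act on them by zero. -/
inductive PathClass : Type v
  | triv (i : T.Edge)
  | path (a : T.Arrow) (k : ℕ)
  | full (i : T.Edge)

variable {T} in
/-- The first vertex of a path. -/
def PathClass.start : T.PathClass → T.Edge
  | .triv i => i
  | .path a _ => T.src a
  | .full i => i

variable (K : Type u) [Field K]

/-- The space underlying the representation. -/
abbrev PathSpace : Type _ := T.PathClass →₀ K

open Classical in
/-- The vector of the path of length `k` starting with the arrow `a`. -/
noncomputable def pathVec (a : T.Arrow) (k : ℕ) : T.PathSpace K :=
  if k < T.valency a then Finsupp.single (.path a k) 1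
  else if k = T.valency a then Finsupp.single (.full (T.src a)) 1 else 0

open Classical in
/-- The action of the trivial path at `i`. -/
noncomputable def idemAct (i : T.Edge) : Module.End K (T.PathSpace K) :=
  Finsupp.linearCombination K fun s : T.PathClass =>
    if s.start = i then Finsupp.single s (1 : K) else 0

open Classical in
/-- The action of an arrow: it is prepended to a path. -/
noncomputable def arrowAct (b : T.Arrow) : Module.End K (T.PathSpace K) :=
  Finsupp.linearCombination K fun s : T.PathClass => match s with
    | .triv i => if T.tgt b = i then T.pathVec K b 1 else 0
    | .path c k => if T.next b = c ∧ 1 ≤ k then T.pathVec K b (k + 1) else 0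
    | .full _ => 0

open Classical in
lemma idemAct_single (i : T.Edge) (s : T.PathClass) : T.idemAct K i (Finsupp.single s 1) =
    if s.start = i then Finsupp.single s (1 : K) else 0 := by
  simp [idemAct]

open Classical in
lemma arrowAct_triv (b : T.Arrow) (i : T.Edge) :
    T.arrowAct K b (Finsupp.single (.triv i) 1) = if T.tgt b = i then T.pathVec K b 1 else 0 := by
  simp [arrowAct]

open Classical in
lemma arrowAct_path (b c : T.Arrow) (k : ℕ) :
    T.arrowAct K b (Finsupp.single (.path c k) 1) =
      if T.next b = c ∧ 1 ≤ k then T.pathVec K b (k + 1) else 0 := by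
  simp [arrowAct]

lemma arrowAct_full (b : T.Arrow) (i : T.Edge) :
    T.arrowAct K b (Finsupp.single (.full i) 1) = 0 := by
  simp [arrowAct]

lemma pathVec_of_valency_lt {a : T.Arrow} {k : ℕ} (h : T.valency a < k) : T.pathVec K a k = 0 := by
  rw [pathVec, if_neg (by omega), if_neg (by omega)]

lemma pathVec_valency (a : T.Arrow) :
    T.pathVec K a (T.valency a) = Finsupp.single (.full (T.src a)) 1 := by
  rw [pathVec, if_neg (lt_irrefl _), if_pos rfl]

lemma pathVec_ne_zero {a : T.Arrow} {k : ℕ} (h : k ≤ T.valency a) : T.pathVec K a k ≠ 0 := by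
  unfold pathVec
  split_ifs
  · simp
  · simp
  · omega

lemma idemAct_pathVec (a : T.Arrow) (k : ℕ) :
    T.idemAct K (T.src a) (T.pathVec K a k) = T.pathVec K a k := by
  unfold pathVec
  split_ifs <;> simp [idemAct_single, PathClass.start]

lemma arrowAct_pathVec_next (b : T.Arrow) {k : ℕ} (hk : 1 ≤ k) :
    T.arrowAct K b (T.pathVec K (T.next b) k) = T.pathVec K b (k + 1) := by
  rcases lt_trichotomy k (T.valency (T.next b)) with h | h | h
  · rw [pathVec, if_pos h, arrowAct_path, if_pos ⟨rfl, hk⟩]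
  · rw [h, pathVec_valency, arrowAct_full, pathVec_of_valency_lt]
    rw [valency_next]
    omega
  · rw [pathVec_of_valency_lt _ _ h, map_zero, pathVec_of_valency_lt]
    rw [valency_next] at h
    omega

lemma arrowAct_pathVec_of_ne {a b : T.Arrow} (h : T.next a ≠ b) (k : ℕ) :
    T.arrowAct K a (T.pathVec K b k) = 0 := by
  unfold pathVec
  split_ifs
  · rw [arrowAct_path, if_neg (fun h' => h h'.1)]
  · exact T.arrowAct_full K _ _
  · exact map_zero _

lemma end_ext {f g : Module.End K (T.PathSpace K)}
    (h : ∀ s, f (Finsupp.single s 1) = g (Finsupp.single s 1)) : f = g :=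
  Finsupp.lhom_ext' fun s => LinearMap.ext_ring (h s)

/-- The action of the free algebra on generators. -/
noncomputable def freeAct : FreeAlgebra K (T.Edge ⊕ T.Arrow) →ₐ[K] Module.End K (T.PathSpace K) :=
  FreeAlgebra.lift K (Sum.elim (T.idemAct K) (T.arrowAct K))

lemma freeAct_rel [Finite V] ⦃x y : FreeAlgebra K (T.Edge ⊕ T.Arrow)⦄
    (h : PathAlgebraRel K T.src T.tgt x y) : T.freeAct K x = T.freeAct K y := by
  classical
  induction h with
  | idem i =>
    simp only [freeAct, map_mul, FreeAlgebra.lift_ι_apply, Sum.elim_inl]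
    refine T.end_ext K fun s => ?_
    rw [Module.End.mul_apply, idemAct_single]
    split_ifs with h
    · rw [idemAct_single, if_pos h]
    · exact map_zero _
  | orth i j hij =>
    simp only [freeAct, map_mul, FreeAlgebra.lift_ι_apply, Sum.elim_inl, map_zero]
    refine T.end_ext K fun s => ?_
    rw [Module.End.mul_apply, idemAct_single]
    split_ifs with h
    · rw [idemAct_single, if_neg (fun h' => hij (h'.symm.trans h))]
      rfl
    · exact map_zero _
  | sum =>
    have := Fintype.ofFinite T.Edge
    rw [finsum_eq_sum_of_fintype, map_sum, map_one]
    simp only [freeAct, FreeAlgebra.lift_ι_apply, Sum.elim_inl]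
    refine T.end_ext K fun s => ?_
    simp [LinearMap.sum_apply, idemAct_single]
  | source a =>
    simp only [freeAct, map_mul, FreeAlgebra.lift_ι_apply, Sum.elim_inl, Sum.elim_inr]
    refine T.end_ext K fun s => ?_
    rw [Module.End.mul_apply]
    cases s with
    | triv i => rw [arrowAct_triv]; split_ifs <;> simp [idemAct_pathVec]
    | path c k => rw [arrowAct_path]; split_ifs <;> simp [idemAct_pathVec]
    | full i => rw [arrowAct_full, map_zero]
  | target a =>
    simp only [freeAct, map_mul, FreeAlgebra.lift_ι_apply, Sum.elim_inl, Sum.elim_inr]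
    refine T.end_ext K fun s => ?_
    rw [Module.End.mul_apply, idemAct_single]
    split_ifs with h
    · rfl
    · rw [map_zero]
      cases s with
      | triv i => rw [arrowAct_triv, if_neg (fun h' => h h'.symm)]
      | path c k =>
        rw [arrowAct_path, if_neg]
        rintro ⟨rfl, -⟩
        exact h rfl
      | full i => rw [arrowAct_full]

/-- The action of the path algebra. -/
noncomputable def pathAct [Finite V] :
    PathAlgebra K T.src T.tgt →ₐ[K] Module.End K (T.PathSpace K) :=
  RingQuot.liftAlgHom K ⟨T.freeAct K, T.freeAct_rel K⟩

lemma pathAct_arrow [Finite V] (a : T.Arrow) :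
    T.pathAct K (PathAlgebra.arrow K T.src T.tgt a) = T.arrowAct K a := by
  refine (RingQuot.liftAlgHom_mkAlgHom_apply K _ (T.freeAct_rel K) _).trans ?_
  simp [freeAct]

lemma run_zero (a : T.Arrow) : T.run K a 0 = 1 := by
  simp [run]

lemma run_succ' (a : T.Arrow) (m : ℕ) : T.run K a (m + 1) =
    PathAlgebra.arrow K T.src T.tgt a * T.run K (T.next a) m := by
  simp only [run, List.range_succ_eq_map, List.map_cons, List.map_map, List.prod_cons]
  rfl

lemma tgt_next_pow (a : T.Arrow) (m : ℕ) :
    T.tgt ((T.next ^ m) a) = T.src ((T.next ^ (m + 1)) a) := by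
  rw [pow_succ', Equiv.Perm.mul_apply]
  rfl

open Classical in
lemma pathAct_run_triv [Finite V] (m : ℕ) (a : T.Arrow) (i : T.Edge) :
    T.pathAct K (T.run K a (m + 1)) (Finsupp.single (.triv i) 1) =
      if T.src ((T.next ^ (m + 1)) a) = i then T.pathVec K a (m + 1) else 0 := by
  induction m generalizing a with
  | zero =>
    rw [run_succ', run_zero, mul_one, pathAct_arrow, arrowAct_triv]
    rfl
  | succ m ih =>
    rw [run_succ', map_mul, Module.End.mul_apply, ih, pathAct_arrow, pow_succ _ (m + 1),
      Equiv.Perm.mul_apply]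
    split_ifs
    · exact T.arrowAct_pathVec_next K a (by omega)
    · exact map_zero _

open Classical in
lemma pathAct_run_path [Finite V] (m : ℕ) (a c : T.Arrow) (k : ℕ) :
    T.pathAct K (T.run K a (m + 1)) (Finsupp.single (.path c k) 1) =
      if (T.next ^ (m + 1)) a = c ∧ 1 ≤ k then T.pathVec K a (k + (m + 1)) else 0 := by
  induction m generalizing a with
  | zero =>
    rw [run_succ', run_zero, mul_one, pathAct_arrow, arrowAct_path]
    rfl
  | succ m ih =>
    rw [run_succ', map_mul, Module.End.mul_apply, ih, pathAct_arrow, pow_succ _ (m + 1),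
      Equiv.Perm.mul_apply]
    split_ifs
    · exact T.arrowAct_pathVec_next K a (by omega)
    · exact map_zero _

lemma pathAct_run_full [Finite V] (m : ℕ) (a : T.Arrow) (i : T.Edge) :
    T.pathAct K (T.run K a (m + 1)) (Finsupp.single (.full i) 1) = 0 := by
  induction m generalizing a with
  | zero => rw [run_succ', run_zero, mul_one, pathAct_arrow, arrowAct_full]
  | succ m ih => rw [run_succ', map_mul, Module.End.mul_apply, ih, map_zero]

open Classical in
lemma pathAct_run_valency [Finite V] (a : T.Arrow) (s : T.PathClass) :
    T.pathAct K (T.run K a (T.valency a)) (Finsupp.single s 1) =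
      if s = .triv (T.src a) then Finsupp.single (.full (T.src a)) 1 else 0 := by
  obtain ⟨m, hm⟩ := Nat.exists_eq_succ_of_ne_zero (T.card_pos a).ne'
  have hm : T.valency a = m + 1 := hm
  have ha := T.next_pow_valency a
  have hf := T.pathVec_valency K a
  rw [hm] at ha hf ⊢
  cases s with
  | triv i =>
    rw [pathAct_run_triv, ha, hf]
    simp only [PathClass.triv.injEq, eq_comm]
  | path c k =>
    rw [pathAct_run_path, if_neg (c := PathClass.path c k = _) (by simp)]
    split_ifs with h
    · exact T.pathVec_of_valency_lt K (by omega)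
    · rfl
  | full i => rw [pathAct_run_full, if_neg (by simp)]

lemma pathAct_rel [Finite V] ⦃x y : PathAlgebra K T.src T.tgt⦄ (h : T.Rel K x y) :
    T.pathAct K x = T.pathAct K y := by
  induction h with
  | zero a b hab =>
    have hne (k : ℕ) : T.arrowAct K a (T.pathVec K b k) = 0 :=
      T.arrowAct_pathVec_of_ne K (fun h => hab ((T.next_fst a).symm.trans (h ▸ rfl))) k
    rw [map_mul, map_zero, pathAct_arrow, pathAct_arrow]
    refine T.end_ext K fun s => ?_
    rw [Module.End.mul_apply]
    cases s with
    | triv i => rw [arrowAct_triv]; split_ifs <;> simp [hne]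
    | path c k => rw [arrowAct_path]; split_ifs <;> simp [hne]
    | full i => simp [arrowAct_full]
  | cycle a =>
    refine T.end_ext K fun s => ?_
    refine (T.pathAct_run_valency K a s).trans (Eq.trans ?_ (T.pathAct_run_valency K a.symm s).symm)
    rw [src_symm]

/-- The representation of the Brauer tree algebra on the space of path classes. -/
noncomputable def act [Finite V] : T.BrauerAlgebra K →ₐ[K] Module.End K (T.PathSpace K) :=
  RingQuot.liftAlgHom K ⟨T.pathAct K, T.pathAct_rel K⟩

lemma act_proj [Finite V] (x : PathAlgebra K T.src T.tgt) :
    T.act K (T.proj K x) = T.pathAct K x :=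
  RingQuot.liftAlgHom_mkAlgHom_apply K _ (T.pathAct_rel K) x

/-- Nontrivial paths running at most once around a cycle are nonzero in the algebra. -/
lemma proj_run_ne_zero [Finite V] (a : T.Arrow) {m : ℕ} (h : m < T.valency a) :
    T.proj K (T.run K a (m + 1)) ≠ 0 := by
  intro h0
  have h1 := T.act_proj K (T.run K a (m + 1))
  rw [h0, map_zero] at h1
  have h2 := T.pathAct_run_triv K m a (T.src ((T.next ^ (m + 1)) a))
  rw [← h1, if_pos rfl] at h2
  exact T.pathVec_ne_zero K h h2.symm

/-! ### Homomorphisms between the indecomposable projectives -/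

/-- The edges `i` and `j` have a common end. -/
def ShareVertex (i j : T.Edge) : Prop :=
  ∃ a b : T.Arrow, a.fst = b.fst ∧ T.src a = i ∧ T.src b = j

lemma ShareVertex.symm {T : BrauerTree V} {i j : T.Edge} (h : T.ShareVertex i j) :
    T.ShareVertex j i := by
  obtain ⟨a, b, hab, ha, hb⟩ := h
  exact ⟨b, a, hab.symm, hb, ha⟩

lemma exists_src_eq (i : T.Edge) : ∃ a : T.Arrow, T.src a = i := by
  obtain ⟨x, hx⟩ := i
  induction x using Sym2.ind with
  | _ x y => exact ⟨⟨(x, y), hx⟩, rfl⟩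

lemma e_mul_proj_run_succ (a : T.Arrow) (m : ℕ) :
    T.e K (T.src a) * T.proj K (T.run K a (m + 1)) = T.proj K (T.run K a (m + 1)) := by
  rw [run_succ', map_mul, ← mul_assoc]
  exact congrArg (· * _) (T.e_mul_arr K a)

lemma proj_run_succ_mul_e (a : T.Arrow) (m : ℕ) :
    T.proj K (T.run K a (m + 1)) * T.e K (T.src ((T.next ^ (m + 1)) a)) =
      T.proj K (T.run K a (m + 1)) := by
  rw [proj_run_succ, mul_assoc, ← tgt_next_pow, arr_mul_e]

lemma e_ne_zero [Finite V] (i : T.Edge) : T.e K i ≠ 0 := by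
  obtain ⟨a, rfl⟩ := T.exists_src_eq i
  intro h
  have := T.e_mul_proj_run_succ K a 0
  rw [h, zero_mul] at this
  exact T.proj_run_ne_zero K a (T.card_pos a) this.symm

lemma exists_e_mul_mul_e_ne_zero [Finite V] {i j : T.Edge} (h : T.ShareVertex i j) :
    ∃ x : T.BrauerAlgebra K, T.e K i * x * T.e K j ≠ 0 := by
  obtain ⟨a, b, hab, rfl, rfl⟩ := h
  obtain ⟨m, hm, rfl⟩ := T.exists_next_pow_eq hab
  cases m with
  | zero =>
    refine ⟨1, ?_⟩
    rw [mul_one]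
    exact (T.e_mul_e_self K (T.src a)).symm ▸ T.e_ne_zero K (T.src a)
  | succ m =>
    refine ⟨T.proj K (T.run K a (m + 1)), ?_⟩
    rw [e_mul_proj_run_succ, proj_run_succ_mul_e]
    exact T.proj_run_ne_zero K a (by omega)

lemma e_mul_mul_e_eq_zero [Finite V] {i j : T.Edge} (h : ¬ T.ShareVertex i j)
    (x : T.BrauerAlgebra K) : T.e K i * x * T.e K j = 0 := by
  have hx : x ∈ Submodule.span K (T.spanningSet K) := T.span_spanningSet K ▸ Submodule.mem_top
  induction hx using Submodule.span_induction with
  | zero => simp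
  | add x y _ _ hx hy => rw [mul_add, add_mul, hx, hy, add_zero]
  | smul c x _ hx => rw [mul_smul_comm, smul_mul_assoc, hx, smul_zero]
  | mem x hx =>
    rcases hx with ⟨k, rfl⟩ | ⟨a, m, -, rfl⟩
    · by_cases hik : i = k
      · subst hik
        rw [e_mul_e_self, e_mul_e]
        rintro rfl
        obtain ⟨a, ha⟩ := T.exists_src_eq i
        exact h ⟨a, a, rfl, ha, ha⟩
      · rw [T.e_mul_e K i k hik, zero_mul]
    · by_cases hi : i = T.src a
      · by_cases hj : T.src ((T.next ^ (m + 1)) a) = j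
        · exact absurd ⟨a, _, (T.next_pow_fst a (m + 1)).symm, hi.symm, hj⟩ h
        · rw [← proj_run_succ_mul_e, mul_assoc, mul_assoc, T.e_mul_e K _ _ hj, mul_zero, mul_zero]
      · rw [← e_mul_proj_run_succ, ← mul_assoc, T.e_mul_e K _ _ hi, zero_mul, zero_mul]

lemma mul_e_of_mem_span {j : T.Edge} {x : T.BrauerAlgebra K}
    (hx : x ∈ (Ideal.span {T.e K j} : Ideal (T.BrauerAlgebra K))) : x * T.e K j = x := by
  obtain ⟨y, rfl⟩ := Ideal.mem_span_singleton'.1 hx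
  rw [mul_assoc, e_mul_e_self]

lemma projModule_hom_eq_zero_iff [Finite V] (i j : T.Edge) :
    (∀ f : T.projModule K i ⟶ T.projModule K j, f = 0) ↔ ¬ T.ShareVertex i j := by
  constructor
  · intro h hs
    obtain ⟨x, hx⟩ := T.exists_e_mul_mul_e_ne_zero K hs
    let g : (Ideal.span {T.e K i} : Ideal (T.BrauerAlgebra K)) →ₗ[T.BrauerAlgebra K]
        (Ideal.span {T.e K j} : Ideal (T.BrauerAlgebra K)) :=
      LinearMap.codRestrict _
        ((LinearMap.toSpanSingleton _ _ (x * T.e K j)).comp (Submodule.subtype _)) fun y =>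
          Ideal.mul_mem_left _ _ (Ideal.mul_mem_left _ _ (Ideal.mem_span_singleton_self _))
    have h0 := h (FGModuleCat.ofHom g)
    have h1 : g = 0 := congrArg (fun f => f.hom.hom) h0
    have h2 := congrArg Subtype.val
      (LinearMap.congr_fun h1 ⟨T.e K i, Ideal.mem_span_singleton_self _⟩)
    apply hx
    rw [mul_assoc]
    exact h2
  · intro hs f
    let g : (Ideal.span {T.e K i} : Ideal (T.BrauerAlgebra K)) →ₗ[T.BrauerAlgebra K]
        (Ideal.span {T.e K j} : Ideal (T.BrauerAlgebra K)) := f.hom.hom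
    let u : (Ideal.span {T.e K i} : Ideal (T.BrauerAlgebra K)) :=
      ⟨T.e K i, Ideal.mem_span_singleton_self _⟩
    have hu : g u = 0 := by
      have h1 : T.e K i • u = u := Subtype.ext (T.e_mul_e_self K i)
      have h2 : T.e K i * (g u : T.BrauerAlgebra K) = g u := by
        conv_rhs => rw [← h1, map_smul]
        rfl
      refine Subtype.ext ?_
      rw [← T.mul_e_of_mem_span K (g u).2, ← h2]
      exact T.e_mul_mul_e_eq_zero K hs _
    have hg : g = 0 := by
      refine LinearMap.ext fun y => ?_
      have h1 : y = (y : T.BrauerAlgebra K) • u := Subtype.ext (T.mul_e_of_mem_span K y.2).symm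
      rw [h1, map_smul, hu, smul_zero]
      rfl
    exact ConcreteCategory.hom_ext _ _ fun y => LinearMap.congr_fun hg y

/-! ### Common cycles -/

lemma IsArrowChain.fst_eq {T : BrauerTree V} {K : Type u} [Field K] {L : List T.Arrow}
    (h : T.IsArrowChain K L) {a b : T.Arrow} (ha : a ∈ L) (hb : b ∈ L) : a.fst = b.fst := by
  have h1 : L.IsChain fun a b => a.fst = b.fst :=
    h.2.imp fun a b hab => by_contra fun hne => hab (T.arr_mul_arr K a b hne)
  have : IsTrans T.Arrow fun a b => a.fst = b.fst := ⟨fun _ _ _ => Eq.trans⟩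
  have : Std.Symm fun a b : T.Arrow => a.fst = b.fst := ⟨fun _ _ => Eq.symm⟩
  exact h1.pairwise.forall_of_forall (R := fun a b : T.Arrow => a.fst = b.fst)
    (fun _ _ => rfl) ha hb

lemma arr_mul_arr_next_ne_zero [Finite V] (a : T.Arrow) (h : 1 < T.valency a) :
    T.arr K a * T.arr K (T.next a) ≠ 0 := by
  have := T.proj_run_ne_zero K a h
  rwa [run_succ', run_succ', run_zero, mul_one, map_mul] at this

/-- The arrows around the tree vertex at which `a` is based, starting with `a`. -/
noncomputable def fullCycle (a : T.Arrow) : List T.Arrow :=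
  (List.range (T.valency a)).map fun k => (T.next ^ k) a

lemma mem_fullCycle [Finite V] (a b : T.Arrow) : b ∈ T.fullCycle a ↔ b.fst = a.fst := by
  simp only [fullCycle, List.mem_map, List.mem_range]
  constructor
  · rintro ⟨k, -, rfl⟩
    exact T.next_pow_fst a k
  · exact fun h => T.exists_next_pow_eq h.symm

lemma isArrowChain_fullCycle [Finite V] (a : T.Arrow) : T.IsArrowChain K (T.fullCycle a) := by
  constructor
  · refine List.Nodup.map_on (fun m hm n hn h => ?_) List.nodup_range
    exact (T.next_pow_apply_eq_iff a (List.mem_range.1 hm) (List.mem_range.1 hn)).1 h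
  · rw [List.isChain_iff_getElem]
    intro k hk
    simp only [fullCycle, List.length_map, List.length_range] at hk
    simp only [fullCycle, List.getElem_map, List.getElem_range]
    rw [pow_succ', Equiv.Perm.mul_apply]
    refine T.arr_mul_arr_next_ne_zero K _ ?_
    rw [T.valency_congr (T.next_pow_fst a k)]
    omega

lemma isACycle_fullCycle [Finite V] (a : T.Arrow) : T.IsACycle K (T.fullCycle a) := by
  refine ⟨T.isArrowChain_fullCycle K a, fun L hL hs => (hs.eq_of_length_le ?_).symm⟩
  have ha : a ∈ L := hs.subset ((T.mem_fullCycle a a).2 rfl)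
  exact (hL.1.subperm fun b hb => (T.mem_fullCycle a b).2 (hL.fst_eq hb ha)).length_le

lemma onCommonACycle_iff [Finite V] (i j : T.Edge) :
    T.OnCommonACycle K i j ↔ T.ShareVertex i j := by
  constructor
  · rintro ⟨L, hL, ⟨a, ha, hi⟩, ⟨b, hb, hj⟩⟩
    have hab := hL.1.fst_eq ha hb
    rcases hi with rfl | rfl <;> rcases hj with rfl | rfl
    · exact ⟨a, b, hab, rfl, rfl⟩
    · exact ⟨a, T.next b, hab.trans (T.next_fst b).symm, rfl, rfl⟩
    · exact ⟨T.next a, b, (T.next_fst a).trans hab, rfl, rfl⟩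
    · exact ⟨T.next a, T.next b, ((T.next_fst a).trans hab).trans (T.next_fst b).symm, rfl, rfl⟩
  · rintro ⟨a, b, hab, rfl, rfl⟩
    exact ⟨T.fullCycle a, T.isACycle_fullCycle K a, ⟨a, (T.mem_fullCycle a a).2 rfl, Or.inl rfl⟩,
      ⟨b, (T.mem_fullCycle a b).2 hab.symm, Or.inl rfl⟩⟩

lemma onCommonACycle_comm [Finite V] (i j : T.Edge) :
    T.OnCommonACycle K i j ↔ T.OnCommonACycle K j i := by
  rw [onCommonACycle_iff, onCommonACycle_iff]
  exact ⟨ShareVertex.symm, ShareVertex.symm⟩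

/-! ### Morphisms between shifted stalk complexes -/

lemma forall_hom_eq_zero_iff_of_iso {C : Type*} [Category* C] [Limits.HasZeroMorphisms C]
    {X Y X' Y' : C} (α : X ≅ X') (β : Y ≅ Y') :
    (∀ f : X ⟶ Y, f = 0) ↔ ∀ f : X' ⟶ Y', f = 0 := by
  constructor
  · intro h f
    rw [← cancel_epi α.hom, ← cancel_mono β.inv, h ((α.hom ≫ f) ≫ β.inv)]
    simp
  · intro h f
    rw [← cancel_epi α.inv, ← cancel_mono β.hom, h ((α.inv ≫ f) ≫ β.hom)]
    simp

lemma forall_map_hom_eq_zero_iff {C D : Type*} [Category* C] [Category* D]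
    [Limits.HasZeroMorphisms C] [Limits.HasZeroMorphisms D] (F : C ⥤ D) [F.Full] [F.Faithful]
    [F.PreservesZeroMorphisms] (X Y : C) :
    (∀ f : X ⟶ Y, f = 0) ↔ ∀ f : F.obj X ⟶ F.obj Y, f = 0 := by
  constructor
  · intro h f
    rw [← F.map_preimage f, h (F.preimage f), F.map_zero]
  · exact fun h f => F.map_injective ((h _).trans (F.map_zero _ _).symm)

variable [Finite V] [HasDerivedCategory.{w} (FGModuleCat.{max u v} (T.BrauerAlgebra K))]

/-- Morphisms from a stalk complex to a shifted one are morphisms of the derived category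
between stalk complexes. -/
lemma forall_hom_shift_eq_zero_iff {M N : FGModuleCat.{max u v} (T.BrauerAlgebra K)} {p q : ℤ}
    {X Y : T.Db K} (α : X ≅ T.stalk K M p) (β : Y ≅ T.stalk K N q) :
    (∀ f : X ⟶ Y⟦(-1 : ℤ)⟧, f = 0) ↔
      ∀ f : (DerivedCategory.singleFunctor _ p).obj M ⟶
        (DerivedCategory.singleFunctor _ (q + 1)).obj N, f = 0 := by
  rw [forall_map_hom_eq_zero_iff (DerivedCategory.Bounded.ι (C := FGModuleCat (T.BrauerAlgebra K)))]
  refine forall_hom_eq_zero_iff_of_iso ((DerivedCategory.Bounded.ι).mapIso α) ?_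
  exact ((DerivedCategory.Bounded.ι).commShiftIso (-1 : ℤ)).app Y ≪≫
    (shiftFunctor _ (-1 : ℤ)).mapIso ((DerivedCategory.Bounded.ι).mapIso β) ≪≫
    ((DerivedCategory.singleFunctors _).shiftIso (-1) (q + 1) q (by ring)).app N

lemma hom_shift_eq_zero_of_le {M N : FGModuleCat.{max u v} (T.BrauerAlgebra K)} {p q : ℤ}
    {X Y : T.Db K} (α : X ≅ T.stalk K M p) (β : Y ≅ T.stalk K N q) (h : p ≤ q) :
    ∀ f : X ⟶ Y⟦(-1 : ℤ)⟧, f = 0 := by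
  rw [T.forall_hom_shift_eq_zero_iff K α β]
  exact fun f => DerivedCategory.TStructure.t.zero_of_isLE_of_isGE f p (q + 1) (by omega)
    (inferInstanceAs (((DerivedCategory.singleFunctor _ p).obj M).IsLE p))
    (inferInstanceAs (((DerivedCategory.singleFunctor _ (q + 1)).obj N).IsGE (q + 1)))

lemma hom_shift_eq_zero_iff {i j : T.Edge} {q : ℤ} {X Y : T.Db K}
    (α : X ≅ T.stalk K (T.projModule K i) (q + 1)) (β : Y ≅ T.stalk K (T.projModule K j) q) :
    (∀ f : X ⟶ Y⟦(-1 : ℤ)⟧, f = 0) ↔ ¬ T.OnCommonACycle K i j := by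
  rw [T.forall_hom_shift_eq_zero_iff K α β, ← forall_map_hom_eq_zero_iff,
    projModule_hom_eq_zero_iff, onCommonACycle_iff]

end BrauerTree

theorem hom_between_stalks_vanishes_iff {K : Type u} [Field K] [IsAlgClosed K]
    {V : Type v} [Finite V] (T : BrauerTree V)
    [HasDerivedCategory.{w} (FGModuleCat.{max u v} (T.BrauerAlgebra K))]
    (i j : T.Edge) (p q : ℤ) (hp : p = 0 ∨ p = 1) (hq : q = 0 ∨ q = 1)
    (Pi Pj : T.Db K) (hPi : T.IsProjStalk K Pi i p) (hPj : T.IsProjStalk K Pj j q) :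
    ((∀ f : Pi ⟶ Pj⟦(-1 : ℤ)⟧, f = 0) ∧ (∀ f : Pj ⟶ Pi⟦(-1 : ℤ)⟧, f = 0)) ↔
      (¬ T.OnCommonACycle K i j ∨ (T.OnCommonACycle K i j ∧ p = q)) := by
  obtain ⟨α⟩ := hPi
  obtain ⟨β⟩ := hPj
  rcases lt_trichotomy p q with h | rfl | h
  · obtain rfl : q = p + 1 := by omega
    have h1 := T.hom_shift_eq_zero_of_le K α β h.le
    rw [T.hom_shift_eq_zero_iff K β α, T.onCommonACycle_comm K j i]
    simp [h1]
  · have h1 := T.hom_shift_eq_zero_of_le K α β le_rfl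
    have h2 := T.hom_shift_eq_zero_of_le K β α le_rfl
    simp only [h1, h2, implies_true, and_self, and_true, true_iff]
    exact (em _).symm
  · obtain rfl : p = q + 1 := by omega
    have h1 := T.hom_shift_eq_zero_of_le K β α h.le
    rw [T.hom_shift_eq_zero_iff K α β]
    simp [h1]
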